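/- Any realization of Algorithm RFD on an input of length n with rescale partition R satisfies |R| − 2 ≤ n / ⌊(1−c)L⌋. -/

import Mathlib

open Finset

/-- One call to `Update`: if the total would exceed `T`, rescale first
(replace each count `s i` by `max 1 ⌊cf * s i⌋`), then add `d` to the count of `x`. -/
noncomputable def RFDupdate {N : ℕ} (cf : ℝ) (d T : ℕ) (s : Fin N → ℕ) (x : Fin N) : Fin N → ℕ :=
  let s' : Fin N → ℕ :=
    if T < (∑ i, s i) + d then (fun i => max 1 ⌊cf * (s i : ℝ)⌋₊) else s
  fun i => if i = x then s' i + d else s' i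

/-- State (counts) of Algorithm RFD after `k` update steps on the input sequence `xs`
(0-indexed: the `k`-th step processes symbol `xs (k-1)`). -/
noncomputable def RFDcounts {N : ℕ} (cf : ℝ) (d T : ℕ) (s0 : Fin N → ℕ) (xs : ℕ → Fin N) : ℕ → Fin N → ℕ
  | 0 => s0
  | k + 1 => RFDupdate cf d T (RFDcounts cf d T s0 xs k) (xs k)

/-- Total counter `t` after `k` update steps. -/
noncomputable def RFDtotal {N : ℕ} (cf : ℝ) (d T : ℕ) (s0 : Fin N → ℕ) (xs : ℕ → Fin N) (k : ℕ) : ℕ :=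
  ∑ i, RFDcounts cf d T s0 xs k i

/-- A rescale takes place in step `k ≥ 1` iff at the beginning of step `k`
the total plus `d` exceeds `T`. -/
def RFDrescaleAt {N : ℕ} (cf : ℝ) (d T : ℕ) (s0 : Fin N → ℕ) (xs : ℕ → Fin N) (k : ℕ) : Prop :=
  1 ≤ k ∧ T < RFDtotal cf d T s0 xs (k - 1) + d

/-- `P` is a partition of the integer interval `[a,b]` into consecutive closed intervals,
listed in order; an interval `[i,j]` is represented by the pair `(i,j)`. -/
def ConsecPartition (a b : ℕ) (P : List (ℕ × ℕ)) : Prop :=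
  P ≠ [] ∧ P.head?.map Prod.fst = some a ∧ P.getLast?.map Prod.snd = some b ∧
    (∀ p ∈ P, p.1 ≤ p.2) ∧ P.Chain' (fun p q => q.1 = p.2 + 1)

/-- `P` is the rescale partition of `[a,b]`: a partition into consecutive intervals `[i,j]`
such that no rescale occurs at steps `i,…,j-1`, and a rescale occurs at step `j` whenever
`j < b` (for the last interval, a rescale at its last step is optional). -/
def RFDrescalePartition {N : ℕ} (cf : ℝ) (d T : ℕ) (s0 : Fin N → ℕ) (xs : ℕ → Fin N)
    (a b : ℕ) (P : List (ℕ × ℕ)) : Prop :=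
  ConsecPartition a b P ∧
    (∀ p ∈ P, ∀ k, p.1 ≤ k → k < p.2 → ¬ RFDrescaleAt cf d T s0 xs k) ∧
    (∀ p ∈ P, p.2 < b → RFDrescaleAt cf d T s0 xs p.2)

/-- The probability `RFD(x; x^k)` that Algorithm RFD assigns to symbol `x` after `k` steps. -/
noncomputable def RFDprob {N : ℕ} (cf : ℝ) (d T : ℕ) (s0 : Fin N → ℕ) (xs : ℕ → Fin N)
    (k : ℕ) (x : Fin N) : ℝ :=
  (RFDcounts cf d T s0 xs k x : ℝ) / (RFDtotal cf d T s0 xs k : ℝ)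

/-- Ideal code length (in bits) of Algorithm RFD on steps `a,…,b` (1-indexed steps;
step `k` encodes symbol `xs (k-1)` using the prediction after `k-1` steps). -/
noncomputable def RFDcodeLen {N : ℕ} (cf : ℝ) (d T : ℕ) (s0 : Fin N → ℕ) (xs : ℕ → Fin N)
    (a b : ℕ) : ℝ :=
  -∑ k ∈ Finset.Icc a b, Real.logb 2 (RFDprob cf d T s0 xs (k - 1) (xs (k - 1)))

/-- Ideal code length (in bits) of a fixed distribution `p` on steps `a,…,b`. -/
noncomputable def distCodeLen {N : ℕ} (p : Fin N → ℝ) (xs : ℕ → Fin N) (a b : ℕ) : ℝ :=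
  -∑ k ∈ Finset.Icc a b, Real.logb 2 (p (xs (k - 1)))

/-! Rescaling shrinks the excess of every count over `1` to at most `c` times its old value, so the
total after a rescaling step is at most `N + c (T - N) + d`. From then on every step adds exactly
`d` until the total exceeds `T - d`, which puts consecutive rescales at least `⌊(1 - c) L⌋` steps
apart. All intervals of the rescale partition but the last end with a rescale, so their right ends
are `|R| - 1` points of `[1, n - 1]` with at least that spacing. -/

section Rescale

variable {ι : Type*} {c : ℝ}

/-- The rescaled counts: what Algorithm RFD replaces the counts `s` by, before adding `d`, in a step
whose total would exceed the threshold. Isolated from `RFDupdate` to estimate its total. -/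
noncomputable def rescale (c : ℝ) (s : ι → ℕ) : ι → ℕ :=
  fun i => max 1 ⌊c * (s i : ℝ)⌋₊

theorem one_le_rescale (s : ι → ℕ) (i : ι) : 1 ≤ rescale c s i :=
  le_max_left _ _

theorem rescale_le {s : ι → ℕ} {i : ι} (hc0 : 0 ≤ c) (hc1 : c ≤ 1) (hs : 1 ≤ s i) :
    (rescale c s i : ℝ) ≤ 1 + c * ((s i : ℝ) - 1) := by
  have hs' : (0 : ℝ) ≤ (s i : ℝ) - 1 := sub_nonneg.mpr (by exact_mod_cast hs)
  have hfloor : (⌊c * (s i : ℝ)⌋₊ : ℝ) ≤ c * s i := Nat.floor_le (by positivity)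
  rw [rescale, Nat.cast_max, Nat.cast_one]
  exact max_le (le_add_of_nonneg_right (mul_nonneg hc0 hs')) (by linarith)

theorem sum_rescale_le [Fintype ι] {s : ι → ℕ} (hc0 : 0 ≤ c) (hc1 : c ≤ 1) (hs : ∀ i, 1 ≤ s i) :
    ((∑ i, rescale c s i : ℕ) : ℝ) ≤
      Fintype.card ι + c * (((∑ i, s i : ℕ) : ℝ) - Fintype.card ι) :=
  calc ((∑ i, rescale c s i : ℕ) : ℝ)
      ≤ ∑ i, (1 + c * ((s i : ℝ) - 1)) := by
        push_cast
        exact sum_le_sum fun i _ => rescale_le hc0 hc1 (hs i)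
    _ = Fintype.card ι + c * (((∑ i, s i : ℕ) : ℝ) - Fintype.card ι) := by
        simp [sum_add_distrib, ← mul_sum]

end Rescale

section Update

variable {N d T : ℕ} {cf : ℝ} {s : Fin N → ℕ}

theorem RFDupdate_eq_add_single (x : Fin N) :
    RFDupdate cf d T s x =
      (if T < (∑ i, s i) + d then rescale cf s else s) + Pi.single x d := by
  ext i
  by_cases hi : i = x <;> simp +unfoldPartialApp [RFDupdate, rescale, hi]

theorem one_le_RFDupdate (hs : ∀ i, 1 ≤ s i) (x i : Fin N) : 1 ≤ RFDupdate cf d T s x i := by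
  rw [RFDupdate_eq_add_single]
  split_ifs
  · exact le_add_right (one_le_rescale s i)
  · exact le_add_right (hs i)

theorem sum_RFDupdate (x : Fin N) :
    ∑ i, RFDupdate cf d T s x i =
      ∑ i, (if T < (∑ i, s i) + d then rescale cf s else s) i + d := by
  simp only [RFDupdate_eq_add_single, Pi.add_apply, sum_add_distrib, sum_pi_single', mem_univ,
    if_true]

end Update

section Total

variable {N d T : ℕ} {cf : ℝ} {s0 : Fin N → ℕ} {xs : ℕ → Fin N} {j k : ℕ}

theorem RFDrescaleAt_succ :
    RFDrescaleAt cf d T s0 xs (k + 1) ↔ T < RFDtotal cf d T s0 xs k + d := by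
  simp [RFDrescaleAt]

theorem one_le_RFDcounts (hs0 : ∀ x, 1 ≤ s0 x) (k : ℕ) (i : Fin N) :
    1 ≤ RFDcounts cf d T s0 xs k i := by
  induction k generalizing i with
  | zero => exact hs0 i
  | succ k ih => exact one_le_RFDupdate ih (xs k) i

theorem RFDtotal_succ_of_not_rescaleAt (h : ¬ RFDrescaleAt cf d T s0 xs (k + 1)) :
    RFDtotal cf d T s0 xs (k + 1) = RFDtotal cf d T s0 xs k + d := by
  rw [RFDrescaleAt_succ, RFDtotal] at h
  rw [RFDtotal, RFDcounts, sum_RFDupdate, if_neg h, RFDtotal]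

theorem RFDtotal_add_of_forall_not_rescaleAt (j m : ℕ)
    (h : ∀ i, j < i → i ≤ j + m → ¬ RFDrescaleAt cf d T s0 xs i) :
    RFDtotal cf d T s0 xs (j + m) = RFDtotal cf d T s0 xs j + m * d := by
  induction m with
  | zero => simp
  | succ m ih =>
    rw [← add_assoc, RFDtotal_succ_of_not_rescaleAt (h _ (by omega) (by omega)),
      ih fun i hji him => h i hji (by omega), Nat.succ_mul, add_assoc]

theorem RFDtotal_succ_le_of_rescaleAt (hc0 : 0 ≤ cf) (hc1 : cf ≤ 1) (hs0 : ∀ x, 1 ≤ s0 x)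
    (h : RFDrescaleAt cf d T s0 xs (k + 1)) :
    (RFDtotal cf d T s0 xs (k + 1) : ℝ) ≤ N + cf * (RFDtotal cf d T s0 xs k - N) + d := by
  rw [RFDrescaleAt_succ, RFDtotal] at h
  have hsum := sum_rescale_le hc0 hc1 <|
    one_le_RFDcounts (cf := cf) (d := d) (T := T) (xs := xs) hs0 k
  rw [Fintype.card_fin] at hsum
  rw [RFDtotal, RFDcounts, sum_RFDupdate, if_pos h, Nat.cast_add]
  exact add_le_add_left hsum _

theorem RFDtotal_le (hc0 : 0 ≤ cf) (hc1 : cf ≤ 1) (hT : (d : ℝ) ≤ (1 - cf) * ((T : ℝ) - N))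
    (hs0 : ∀ x, 1 ≤ s0 x) (hsum : ∑ x, s0 x ≤ T) (k : ℕ) : RFDtotal cf d T s0 xs k ≤ T := by
  induction k with
  | zero => exact hsum
  | succ k ih =>
    by_cases h : RFDrescaleAt cf d T s0 xs (k + 1)
    · have ih' : cf * RFDtotal cf d T s0 xs k ≤ cf * T := by gcongr
      have hle := RFDtotal_succ_le_of_rescaleAt hc0 hc1 hs0 h
      exact_mod_cast (by linarith : (RFDtotal cf d T s0 xs (k + 1) : ℝ) ≤ T)
    · rw [RFDtotal_succ_of_not_rescaleAt h]
      exact not_lt.mp (RFDrescaleAt_succ.not.mp h)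

theorem RFDtotal_le_of_rescaleAt (hc0 : 0 ≤ cf) (hc1 : cf ≤ 1)
    (hT : (d : ℝ) ≤ (1 - cf) * ((T : ℝ) - N)) (hs0 : ∀ x, 1 ≤ s0 x) (hsum : ∑ x, s0 x ≤ T)
    (h : RFDrescaleAt cf d T s0 xs k) :
    (RFDtotal cf d T s0 xs k : ℝ) ≤ N + cf * (T - N) + d := by
  obtain ⟨k, rfl⟩ := Nat.exists_eq_add_of_le' h.1
  calc (RFDtotal cf d T s0 xs (k + 1) : ℝ)
      ≤ N + cf * (RFDtotal cf d T s0 xs k - N) + d := RFDtotal_succ_le_of_rescaleAt hc0 hc1 hs0 h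
    _ ≤ N + cf * (T - N) + d := by
      gcongr
      exact RFDtotal_le hc0 hc1 hT hs0 hsum k

theorem lt_RFDtotal_add_of_next_rescaleAt (hjk : j < k) (hk : RFDrescaleAt cf d T s0 xs k)
    (hbetween : ∀ i, j < i → i < k → ¬ RFDrescaleAt cf d T s0 xs i) :
    T < RFDtotal cf d T s0 xs j + (k - j) * d := by
  obtain ⟨m, rfl⟩ := Nat.exists_eq_add_of_lt hjk
  rw [RFDrescaleAt_succ,
    RFDtotal_add_of_forall_not_rescaleAt j m fun i hji him => hbetween i hji (by omega)] at hk
  rwa [add_assoc j, Nat.add_sub_cancel_left, Nat.succ_mul, ← add_assoc]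

theorem add_floor_le_of_next_rescaleAt (hd : 1 ≤ d) (hc0 : 0 ≤ cf) (hc1 : cf ≤ 1)
    (hT : (d : ℝ) ≤ (1 - cf) * ((T : ℝ) - N)) (hs0 : ∀ x, 1 ≤ s0 x) (hsum : ∑ x, s0 x ≤ T)
    (hjk : j < k) (hj : RFDrescaleAt cf d T s0 xs j) (hk : RFDrescaleAt cf d T s0 xs k)
    (hbetween : ∀ i, j < i → i < k → ¬ RFDrescaleAt cf d T s0 xs i) :
    j + ⌊(1 - cf) * (((T : ℝ) - N) / d)⌋₊ ≤ k := by
  have hd' : (0 : ℝ) < d := by exact_mod_cast hd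
  have hafter := RFDtotal_le_of_rescaleAt hc0 hc1 hT hs0 hsum hj
  have hbefore : (T : ℝ) < RFDtotal cf d T s0 xs j + (k - j : ℕ) * d := by
    exact_mod_cast lt_RFDtotal_add_of_next_rescaleAt hjk hk hbetween
  have hlt : (1 - cf) * (((T : ℝ) - N) / d) < (k - j + 1 : ℕ) := by
    rw [← mul_div_assoc, div_lt_iff₀ hd', Nat.cast_succ]
    linarith
  have hfloor := (Nat.floor_lt' (Nat.succ_ne_zero _)).mpr hlt
  omega

end Total

section Partition

theorem add_length_nsmul_le_of_isChain {M : Type*} [AddCommMonoid M] [Preorder M]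
    [IsOrderedAddMonoid M] {F a b : M} {l : List M} (h : (a :: l).IsChain fun x y => x + F ≤ y)
    (hb : ∀ x ∈ a :: l, x ≤ b) : a + l.length • F ≤ b := by
  induction l generalizing a with
  | nil => simpa using hb
  | cons y l ih =>
    rw [List.isChain_cons_cons] at h
    calc a + (y :: l).length • F = a + F + l.length • F := by
          rw [List.length_cons, succ_nsmul', add_assoc]
      _ ≤ y + l.length • F := by gcongr; exact h.1
      _ ≤ b := ih h.2 fun x hx => hb x (List.mem_cons_of_mem a hx)

namespace ConsecPartition

variable {a b : ℕ} {P : List (ℕ × ℕ)}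

theorem snd_lt_of_mem_dropLast (hP : ConsecPartition a b P) {p : ℕ × ℕ} (hp : p ∈ P.dropLast) :
    p.2 < b := by
  obtain ⟨hne, -, hlast, hle, hchain⟩ := hP
  have hsorted : P.Pairwise fun p q => p.2 < q.2 := by
    have : IsTrans (ℕ × ℕ) fun p q => p.2 < q.2 := ⟨fun _ _ _ => lt_trans⟩
    refine (hchain.imp_of_mem_imp fun p q _ hq hpq => ?_).pairwise
    have := hle q hq
    omega
  rw [List.getLast?_eq_some_getLast hne, Option.map_some, Option.some.injEq] at hlast
  rw [← List.dropLast_append_getLast hne, List.pairwise_append] at hsorted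
  exact hlast ▸ hsorted.2.2 p hp _ (List.mem_singleton_self _)

theorem length_sub_two_mul_le {F : ℕ} (hP : ConsecPartition a b P)
    (hgap : P.dropLast.IsChain fun p q => p.2 + F ≤ q.2) : (P.length - 2) * F ≤ b - a := by
  have hend : ∀ x ∈ P.dropLast.map Prod.snd, x ≤ b :=
    List.forall_mem_map.mpr fun _ hp => (hP.snd_lt_of_mem_dropLast hp).le
  have hchain : (P.dropLast.map Prod.snd).IsChain fun x y => x + F ≤ y :=
    (List.isChain_map Prod.snd).mpr hgap
  obtain ⟨-, hhead, -, hle, -⟩ := hP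
  match P with
  | [] | [_] => simp
  | p :: q :: P =>
    have hpa : p.1 = a := by simpa using hhead
    have hp : p.1 ≤ p.2 := hle p List.mem_cons_self
    have hspan : p.2 + P.length * F ≤ b := by
      simpa using add_length_nsmul_le_of_isChain hchain hend
    change P.length * F ≤ b - a
    omega

end ConsecPartition

theorem RFDrescalePartition.isChain_dropLast {N d T n F a : ℕ} {cf : ℝ} {s0 : Fin N → ℕ}
    {xs : ℕ → Fin N} {R : List (ℕ × ℕ)} (hR : RFDrescalePartition cf d T s0 xs a n R)
    (hgap : ∀ j k, j < k → RFDrescaleAt cf d T s0 xs j → RFDrescaleAt cf d T s0 xs k →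
      (∀ i, j < i → i < k → ¬ RFDrescaleAt cf d T s0 xs i) → j + F ≤ k) :
    R.dropLast.IsChain fun p q => p.2 + F ≤ q.2 := by
  obtain ⟨hP, hinterior, hend⟩ := hR
  have hrescale : ∀ p ∈ R.dropLast, RFDrescaleAt cf d T s0 xs p.2 := fun p hp =>
    hend p (List.mem_of_mem_dropLast hp) (hP.snd_lt_of_mem_dropLast hp)
  obtain ⟨-, -, -, hle, hchain⟩ := hP
  refine hchain.dropLast.imp_of_mem_imp fun p q hp hq hpq => ?_
  have hqR := List.mem_of_mem_dropLast hq
  have hlt : p.2 < q.2 := hpq.symm.trans_le (hle q hqR)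
  exact hgap p.2 q.2 hlt (hrescale p hp) (hrescale q hq) fun i hpi hiq =>
    hinterior q hqR i (hpq.trans_le hpi) hiq

end Partition

/-- Lemma 3: any realization of Algorithm RFD on an input of length `n`
with rescale partition `R` satisfies `|R| - 2 ≤ n / ⌊(1-c)L⌋`, where `L = (T - N)/d`. -/
theorem stmt2 (N d T : ℕ) (cf : ℝ) (hN : 1 < N)
    (s0 : Fin N → ℕ) (xs : ℕ → Fin N)
    (hd : 1 ≤ d) (hc0 : 0 ≤ cf) (hc1 : cf < 1)
    (hT : (d : ℝ) ≤ (1 - cf) * ((T : ℝ) - N))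
    (hs0 : ∀ x, 1 ≤ s0 x) (hsum : ∑ x, s0 x ≤ T)
    (n : ℕ) (hn : 1 ≤ n)
    (R : List (ℕ × ℕ)) (hR : RFDrescalePartition cf d T s0 xs 1 n R)
    (L : ℝ) (hL : L = ((T : ℝ) - N) / d) :
    (R.length : ℝ) - 2 ≤ (n : ℝ) / (⌊(1 - cf) * L⌋₊ : ℝ) := by
  have hd' : (0 : ℝ) < d := by exact_mod_cast hd
  have hpos : 0 < ⌊(1 - cf) * L⌋₊ := by
    rwa [hL, Nat.floor_pos, ← mul_div_assoc, one_le_div₀ hd']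
  have hgap : R.dropLast.IsChain fun p q => p.2 + ⌊(1 - cf) * L⌋₊ ≤ q.2 :=
    hR.isChain_dropLast fun _ _ =>
      hL ▸ add_floor_le_of_next_rescaleAt hd hc0 hc1.le hT hs0 hsum
  have hspan : (R.length - 2) * ⌊(1 - cf) * L⌋₊ ≤ n :=
    (hR.1.length_sub_two_mul_le hgap).trans (Nat.sub_le n 1)
  have hlength : (R.length : ℝ) - 2 ≤ (R.length - 2 : ℕ) := by
    rw [sub_le_iff_le_add]
    exact_mod_cast le_tsub_add
  rw [le_div_iff₀ (by exact_mod_cast hpos)]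
  calc ((R.length : ℝ) - 2) * (⌊(1 - cf) * L⌋₊ : ℝ)
      ≤ ((R.length - 2 : ℕ) : ℝ) * (⌊(1 - cf) * L⌋₊ : ℝ) := by gcongr
    _ ≤ n := by exact_mod_cast hspan
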